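/- arXiv:math/0603584 — 4 statements merged into one kernel-verified Lean document; each statement's English description precedes it below -/
import Mathlib

section
/- Let X be a complete ultrametric space such that: (i) every closed ball of positive diameter is the union of finitely many maximal proper closed subballs, and (ii) for every sequence B₁ ⊋ B₂ ⊋ B₃ ⊋ … of closed balls with strict inclusions, the diameters of the Bₖ tend to zero. Then every closed ball of X is compact; in particular, X is locally compact. -/
/-!
Fix `ε > 0`. An infinite strictly decreasing chain of balls of diameter at least `ε` would
contradict `diam → 0`, so well-founded induction applies: split a ball of diameter at least `ε` into
finitely many proper subballs, and those again, until every piece has diameter less than `ε`. Hence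
closed balls are totally bounded, and they are complete, being closed in a complete space.
-/

/-- A closed ball in a metric space: a set of the form `B̄(a,r)` with `r ≥ 0`. -/
def IsClosedBall {X : Type*} [MetricSpace X] (B : Set X) : Prop :=
  ∃ (a : X) (r : ℝ), 0 ≤ r ∧ B = Metric.closedBall a r

/-- `B'` is a maximal proper closed subball of `B`: a closed ball strictly contained
in `B` such that no closed ball is strictly between `B'` and `B`. -/
def IsMaxSubball {X : Type*} [MetricSpace X] (B' B : Set X) : Prop :=
  IsClosedBall B' ∧ B' ⊂ B ∧ ∀ B'' : Set X, IsClosedBall B'' → B' ⊂ B'' → ¬(B'' ⊂ B)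

open Filter Metric Set Topology
open scoped ENNReal

theorem wellFounded_and_le_of_tendsto {α β : Type*} [Preorder β] [TopologicalSpace β]
    [ClosedIciTopology β] {r : α → α → Prop} {f : α → β} {b c : β} (hcb : ¬c ≤ b)
    (hf : ∀ u : ℕ → α, (∀ n, r (u (n + 1)) (u n)) → Tendsto (fun n ↦ f (u n)) atTop (𝓝 b)) :
    WellFounded fun x y ↦ r x y ∧ c ≤ f y := by
  refine wellFounded_iff_isEmpty_descending_chain.2 ⟨fun ⟨u, hu⟩ ↦ hcb ?_⟩
  exact ge_of_tendsto' (hf u fun n ↦ (hu n).1) fun n ↦ (hu n).2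

section PseudoEMetricSpace

variable {X : Type*} [PseudoEMetricSpace X]

theorem exists_finite_sUnion_subset_biUnion_eball {M : Set (Set X)} (hM : M.Finite) {ε : ℝ≥0∞}
    (hε : ∀ m ∈ M, ediam m < ε) : ∃ t : Set X, t.Finite ∧ ⋃₀ M ⊆ ⋃ y ∈ t, eball y ε := by
  have exists_net : ∀ m ∈ M, ∃ t : Set X, t.Finite ∧ m ⊆ ⋃ y ∈ t, eball y ε := by
    intro m hm
    obtain rfl | ⟨y, hy⟩ := m.eq_empty_or_nonempty
    · exact ⟨∅, finite_empty, empty_subset _⟩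
    · refine ⟨{y}, finite_singleton y, fun x hx ↦ mem_biUnion (mem_singleton y) ?_⟩
      exact (edist_le_ediam_of_mem hx hy).trans_lt (hε m hm)
  choose! t ht_fin ht_cover using exists_net
  refine ⟨⋃ m ∈ M, t m, hM.biUnion ht_fin, sUnion_subset fun m hm ↦ (ht_cover m hm).trans ?_⟩
  exact biUnion_subset_biUnion_left (subset_biUnion_of_mem hm)

theorem totallyBounded_of_forall_exists_finite_ediam_lt {s : Set X}
    (hs : ∀ ε > 0, ∃ M : Set (Set X), M.Finite ∧ (∀ m ∈ M, ediam m < ε) ∧ s ⊆ ⋃₀ M) :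
    TotallyBounded s := by
  refine EMetric.totallyBounded_iff.2 fun ε hε ↦ ?_
  obtain ⟨M, hM_fin, hM_diam, hsM⟩ := hs ε hε
  obtain ⟨t, ht_fin, hMt⟩ := exists_finite_sUnion_subset_biUnion_eball hM_fin hM_diam
  exact ⟨t, ht_fin, hsM.trans hMt⟩

theorem exists_finite_ediam_lt_subset_sUnion {𝓑 : Set (Set X)}
    (hsplit : ∀ B ∈ 𝓑, 0 < ediam B →
      ∃ M : Set (Set X), M.Finite ∧ (∀ m ∈ M, m ∈ 𝓑 ∧ m ⊂ B) ∧ B ⊆ ⋃₀ M)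
    (hchain : ∀ B : ℕ → Set X, (∀ n, B n ∈ 𝓑) → (∀ n, B (n + 1) ⊂ B n) →
      Tendsto (fun n ↦ ediam (B n)) atTop (𝓝 0))
    {ε : ℝ≥0∞} (hε : 0 < ε) {B : Set X} (hB : B ∈ 𝓑) :
    ∃ M : Set (Set X), M.Finite ∧ (∀ m ∈ M, ediam m < ε) ∧ B ⊆ ⋃₀ M := by
  have wf : WellFounded fun C D : 𝓑 ↦ C.1 ⊂ D.1 ∧ ε ≤ ediam D.1 :=
    wellFounded_and_le_of_tendsto hε.not_ge fun u hu ↦ hchain (fun n ↦ u n) (fun n ↦ (u n).2) hu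
  lift B to 𝓑 using hB
  induction B using wf.induction with
  | _ B ih
  obtain hlt | hle := lt_or_ge (ediam B.1) ε
  · exact ⟨{B.1}, finite_singleton _, forall_eq.2 hlt, (sUnion_singleton B.1).ge⟩
  · obtain ⟨M, hM_fin, hM, hBM⟩ := hsplit B B.2 (hε.trans_le hle)
    have exists_refinement : ∀ m ∈ M, ∃ N : Set (Set X),
        N.Finite ∧ (∀ k ∈ N, ediam k < ε) ∧ m ⊆ ⋃₀ N :=
      fun m hm ↦ ih ⟨m, (hM m hm).1⟩ ⟨(hM m hm).2, hle⟩
    choose! N hN_fin hN_diam hN_cover using exists_refinement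
    refine ⟨⋃ m ∈ M, N m, hM_fin.biUnion hN_fin, ?_, hBM.trans (sUnion_subset fun m hm ↦ ?_)⟩
    · simpa only [mem_iUnion₂] using fun k ⟨m, hm, hk⟩ ↦ hN_diam m hm k hk
    · exact (hN_cover m hm).trans (sUnion_subset_sUnion (subset_biUnion_of_mem hm))

theorem totallyBounded_of_finite_split_of_tendsto_ediam {𝓑 : Set (Set X)}
    (hsplit : ∀ B ∈ 𝓑, 0 < ediam B →
      ∃ M : Set (Set X), M.Finite ∧ (∀ m ∈ M, m ∈ 𝓑 ∧ m ⊂ B) ∧ B ⊆ ⋃₀ M)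
    (hchain : ∀ B : ℕ → Set X, (∀ n, B n ∈ 𝓑) → (∀ n, B (n + 1) ⊂ B n) →
      Tendsto (fun n ↦ ediam (B n)) atTop (𝓝 0))
    {B : Set X} (hB : B ∈ 𝓑) : TotallyBounded B :=
  totallyBounded_of_forall_exists_finite_ediam_lt fun _ hε ↦
    exists_finite_ediam_lt_subset_sUnion hsplit hchain hε hB

end PseudoEMetricSpace

theorem IsClosedBall.isClosed {X : Type*} [MetricSpace X] {B : Set X} (hB : IsClosedBall B) :
    IsClosed B := by
  obtain ⟨a, r, -, rfl⟩ := hB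
  exact isClosed_closedBall

theorem ultrametric_closedBall_compact_general {X : Type*} [MetricSpace X] [CompleteSpace X]
    (hsplit : ∀ B : Set X, IsClosedBall B → 0 < ediam B →
      ∃ M : Set (Set X), M.Finite ∧ (∀ m ∈ M, IsClosedBall m ∧ m ⊂ B) ∧ B ⊆ ⋃₀ M)
    (hchain : ∀ B : ℕ → Set X, (∀ n, IsClosedBall (B n)) → (∀ n, B (n + 1) ⊂ B n) →
      Tendsto (fun n ↦ ediam (B n)) atTop (𝓝 0)) :
    (∀ B : Set X, IsClosedBall B → IsCompact B) ∧ LocallyCompactSpace X := by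
  have totallyBounded_of_isClosedBall : ∀ B : Set X, IsClosedBall B → TotallyBounded B := fun B ↦
    totallyBounded_of_finite_split_of_tendsto_ediam (𝓑 := {B | IsClosedBall B}) hsplit hchain
  have isCompact_of_isClosedBall : ∀ B : Set X, IsClosedBall B → IsCompact B := fun B hB ↦
    (totallyBounded_of_isClosedBall B hB).isCompact_of_isClosed hB.isClosed
  have : ProperSpace X := .of_isCompact_closedBall_of_le 0 fun a r hr ↦
    isCompact_of_isClosedBall _ ⟨a, r, hr, rfl⟩
  exact ⟨isCompact_of_isClosedBall, inferInstance⟩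

/-- In a complete ultrametric space in which every closed ball of positive diameter is
a finite union of maximal proper closed subballs, and in which diameters along any
strictly decreasing sequence of closed balls tend to zero, every closed ball is
compact; in particular the space is locally compact. -/
theorem ultrametric_closedBall_compact {X : Type*} [MetricSpace X] [IsUltrametricDist X]
    [CompleteSpace X]
    (h1 : ∀ B : Set X, IsClosedBall B → 0 < EMetric.diam B →
      ∃ M : Set (Set X), M.Finite ∧ (∀ m ∈ M, IsMaxSubball m B) ∧ B = ⋃₀ M)
    (h2 : ∀ B : ℕ → Set X, (∀ n, IsClosedBall (B n)) → (∀ n, B (n + 1) ⊂ B n) →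
      Filter.Tendsto (fun n => EMetric.diam (B n)) Filter.atTop (nhds 0)) :
    (∀ B : Set X, IsClosedBall B → IsCompact B) ∧ LocallyCompactSpace X := by
  exact ultrametric_closedBall_compact_general (fun B hB hpos ↦ (h1 B hB hpos).imp
    fun _ ⟨hfin, hmax, hU⟩ ↦ ⟨hfin, fun m hm ↦ (hmax m hm).imp_right And.left, hU.subset⟩) h2
end

section
/- Let X be an ultrametric space in which every closed ball of positive diameter is the union of its (finitely many) maximal proper closed subballs, and let ν be a Borel measure on X which is finite on closed balls. Let I and I' be closed balls of positive diameter with I ≠ I' (as sets). Let f : X → ℂ vanish outside I, be constant on each maximal proper closed subball of I, and satisfy ∫ f dν = 0; let f' : X → ℂ vanish outside I', be constant on each maximal proper closed subball of I', and satisfy ∫ f' dν = 0. Then ∫ conj(f(x)) · f'(x) dν(x) = 0, i.e. f and f' are orthogonal in L²(X,ν). -/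
open MeasureTheory

/-! Two distinct balls of an ultrametric space are either disjoint or strictly nested. In the nested
case the smaller ball lies inside a single maximal proper subball of the larger one, so the function
attached to the larger ball is constant where the other one lives, and it factors out of an integral
that vanishes. -/

section Balls

variable {X : Type*} [MetricSpace X] {B I J : Set X}

theorem IsClosedBall.nonempty (hB : IsClosedBall B) : B.Nonempty := by
  obtain ⟨a, r, hr, rfl⟩ := hB
  exact ⟨a, Metric.mem_closedBall_self hr⟩

theorem IsClosedBall.measurableSet [MeasurableSpace X] [OpensMeasurableSpace X]
    (hB : IsClosedBall B) : MeasurableSet B := by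
  obtain ⟨a, r, -, rfl⟩ := hB
  exact measurableSet_closedBall

variable [IsUltrametricDist X]

theorem IsClosedBall.subset_trichotomy (hI : IsClosedBall I) (hJ : IsClosedBall J) :
    I ⊆ J ∨ J ⊆ I ∨ Disjoint I J := by
  obtain ⟨a, r, -, rfl⟩ := hI
  obtain ⟨b, s, -, rfl⟩ := hJ
  exact IsUltrametricDist.closedBall_subset_trichotomy a b r s

theorem IsClosedBall.subset_maxSubball_of_not_disjoint (hJ : IsClosedBall J) (hJI : J ⊂ I)
    (hB : IsMaxSubball B I) (hJB : ¬Disjoint J B) : J ⊆ B := by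
  obtain ⟨hBball, -, hBmax⟩ := hB
  rcases hJ.subset_trichotomy hBball with hsub | hsup | hdisj
  · exact hsub
  · by_contra hnot
    exact hBmax J hJ ⟨hsup, hnot⟩ hJI
  · exact absurd hdisj hJB

theorem IsClosedBall.exists_isMaxSubball_superset (hJ : IsClosedBall J) (hJI : J ⊂ I)
    (hcover : I ⊆ ⋃₀ {B | IsMaxSubball B I}) : ∃ B, IsMaxSubball B I ∧ J ⊆ B := by
  obtain ⟨a, haJ⟩ := hJ.nonempty
  obtain ⟨B, hB, haB⟩ := hcover (hJI.subset haJ)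
  have hJB : ¬Disjoint J B := Set.not_disjoint_iff.2 ⟨a, haJ, haB⟩
  exact ⟨B, hB, hJ.subset_maxSubball_of_not_disjoint hJI hB hJB⟩

end Balls

section Integration

variable {α E : Type*} [MeasurableSpace α] {μ : Measure α} [NormedAddCommGroup E] {f g : α → E}

theorem integrable_of_forall_eq_on_finite_cover {S : Set (Set α)} (hS : S.Finite)
    (hmeas : ∀ B ∈ S, MeasurableSet B) (hfin : ∀ B ∈ S, μ B ≠ ⊤)
    (hconst : ∀ B ∈ S, ∀ x ∈ B, ∀ y ∈ B, f x = f y) (hzero : ∀ x ∉ ⋃₀ S, f x = 0) :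
    Integrable f μ := by
  have integrableOn_piece : ∀ B ∈ S, IntegrableOn f B μ := by
    intro B hB
    rcases B.eq_empty_or_nonempty with rfl | ⟨b, hb⟩
    · exact integrableOn_empty
    · exact (integrableOn_const (C := f b) (hfin B hB)).congr_fun
        (fun x hx => hconst B hB b hb x hx) (hmeas B hB)
  have integrableOn_cover : IntegrableOn f (⋃₀ S) μ := by
    rw [Set.sUnion_eq_biUnion]
    exact (integrableOn_finite_biUnion hS).2 integrableOn_piece
  exact integrableOn_cover.integrable_of_forall_notMem_eq_zero hzero

variable {𝕜 : Type*} [RCLike 𝕜] [InnerProductSpace 𝕜 E]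

theorem integral_inner_eq_zero_of_disjoint {s t : Set α} (hst : Disjoint s t)
    (hf : ∀ x ∉ s, f x = 0) (hg : ∀ x ∉ t, g x = 0) : ∫ x, inner 𝕜 (f x) (g x) ∂μ = 0 := by
  refine integral_eq_zero_of_ae (.of_forall fun x => ?_)
  by_cases hx : x ∈ s
  · simp only [hg x (hst.notMem_of_mem_left hx), inner_zero_right, Pi.zero_apply]
  · simp only [hf x hx, inner_zero_left, Pi.zero_apply]

theorem integral_inner_eq_zero_comm :
    ∫ x, inner 𝕜 (f x) (g x) ∂μ = 0 ↔ ∫ x, inner 𝕜 (g x) (f x) ∂μ = 0 := by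
  rw [← map_eq_zero (starRingEnd 𝕜), ← integral_conj]
  simp only [inner_conj_symm]

theorem integral_inner_eq_zero_of_forall_eq_on [NormedSpace ℝ E] [CompleteSpace E] {s : Set α}
    (hg : ∀ x ∈ s, ∀ y ∈ s, g x = g y) (hf_zero : ∀ x ∉ s, f x = 0) (hf : Integrable f μ)
    (hf_mean : ∫ x, f x ∂μ = 0) : ∫ x, inner 𝕜 (g x) (f x) ∂μ = 0 := by
  rcases s.eq_empty_or_nonempty with rfl | ⟨a, ha⟩
  · simp only [hf_zero _ (Set.notMem_empty _), inner_zero_right, integral_zero]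
  have factor : ∀ x, inner 𝕜 (g x) (f x) = inner 𝕜 (g a) (f x) := by
    intro x
    by_cases hx : x ∈ s
    · rw [hg x hx a ha]
    · simp only [hf_zero x hx, inner_zero_right]
  calc ∫ x, inner 𝕜 (g x) (f x) ∂μ
      = ∫ x, inner 𝕜 (g a) (f x) ∂μ := by simp only [factor]
    _ = inner 𝕜 (g a) (∫ x, f x ∂μ) := integral_inner hf (g a)
    _ = 0 := by rw [hf_mean, inner_zero_right]

end Integration

section Wavelets

variable {X E : Type*} [MetricSpace X] [MeasurableSpace X] {ν : Measure X} {I J : Set X}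
  [NormedAddCommGroup E] [NormedSpace ℝ E] {f g : X → E}

/-- Membership of `f` in the wavelet space `V⁰_I` of a ball `I`, for functions with values in a
normed space. Integrability is a field because the Bochner integral of a non-integrable function is
`0` by convention, which would make the zero-mean condition void. -/
structure IsWavelet (ν : Measure X) (I : Set X) (f : X → E) : Prop where
  eq_zero_of_notMem : ∀ x ∉ I, f x = 0
  eq_of_mem_maxSubball : ∀ B, IsMaxSubball B I → ∀ x ∈ B, ∀ y ∈ B, f x = f y
  integrable : Integrable f ν
  integral_eq_zero : ∫ x, f x ∂ν = 0

theorem isWavelet_of_finite_maxSubballs [OpensMeasurableSpace X]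
    (hν : ∀ B : Set X, IsClosedBall B → ν B < ⊤)
    (hI : {B | IsMaxSubball B I}.Finite ∧ I = ⋃₀ {B | IsMaxSubball B I})
    (hzero : ∀ x ∉ I, f x = 0)
    (hconst : ∀ B, IsMaxSubball B I → ∀ x ∈ B, ∀ y ∈ B, f x = f y)
    (hmean : ∫ x, f x ∂ν = 0) : IsWavelet ν I f where
  eq_zero_of_notMem := hzero
  eq_of_mem_maxSubball := hconst
  integrable := integrable_of_forall_eq_on_finite_cover hI.1
    (fun _ hB => hB.1.measurableSet) (fun B hB => (hν B hB.1).ne) hconst (hI.2 ▸ hzero)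
  integral_eq_zero := hmean

variable [IsUltrametricDist X] [CompleteSpace E] {𝕜 : Type*} [RCLike 𝕜] [InnerProductSpace 𝕜 E]

theorem IsWavelet.integral_inner_eq_zero_of_ssubset (hg : IsWavelet ν I g) (hf : IsWavelet ν J f)
    (hJ : IsClosedBall J) (hJI : J ⊂ I) (hcover : I ⊆ ⋃₀ {B | IsMaxSubball B I}) :
    ∫ x, inner 𝕜 (g x) (f x) ∂ν = 0 := by
  obtain ⟨B, hB, hJB⟩ := hJ.exists_isMaxSubball_superset hJI hcover
  have hg_const : ∀ x ∈ J, ∀ y ∈ J, g x = g y := fun x hx y hy =>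
    hg.eq_of_mem_maxSubball B hB x (hJB hx) y (hJB hy)
  exact integral_inner_eq_zero_of_forall_eq_on hg_const hf.eq_zero_of_notMem hf.integrable
    hf.integral_eq_zero

theorem ultrametric_wavelets_orthogonal_general (hI : IsClosedBall I) (hJ : IsClosedBall J)
    (hIcover : I ⊆ ⋃₀ {B | IsMaxSubball B I}) (hJcover : J ⊆ ⋃₀ {B | IsMaxSubball B J})
    (hne : I ≠ J) (hf : IsWavelet ν I f) (hg : IsWavelet ν J g) :
    ∫ x, inner 𝕜 (f x) (g x) ∂ν = 0 := by
  rcases hI.subset_trichotomy hJ with hIJ | hJI | hdisj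
  · exact integral_inner_eq_zero_comm.1
      (hg.integral_inner_eq_zero_of_ssubset hf hI (hIJ.ssubset_of_ne hne) hJcover)
  · exact hf.integral_inner_eq_zero_of_ssubset hg hJ (hJI.ssubset_of_ne hne.symm) hIcover
  · exact integral_inner_eq_zero_of_disjoint hdisj hf.eq_zero_of_notMem hg.eq_zero_of_notMem

end Wavelets

/-- Two wavelet functions associated to distinct balls are orthogonal in `L²(X,ν)`:
if `f` is supported in the ball `I`, constant on each maximal proper closed subball
of `I`, and has zero mean, and `f'` is likewise associated to a ball `I' ≠ I`, then
`∫ conj(f) · f' dν = 0`. -/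
theorem ultrametric_wavelets_orthogonal {X : Type*} [MetricSpace X] [IsUltrametricDist X]
    [MeasurableSpace X] [BorelSpace X] (ν : Measure X)
    (hstruct : ∀ B : Set X, IsClosedBall B → 0 < EMetric.diam B →
      {B' : Set X | IsMaxSubball B' B}.Finite ∧ B = ⋃₀ {B' : Set X | IsMaxSubball B' B})
    (hν : ∀ B : Set X, IsClosedBall B → ν B < ⊤)
    {I I' : Set X} (hI : IsClosedBall I) (hdI : 0 < EMetric.diam I)
    (hI' : IsClosedBall I') (hdI' : 0 < EMetric.diam I') (hne : I ≠ I')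
    (f f' : X → ℂ)
    (hf0 : ∀ x ∉ I, f x = 0)
    (hfc : ∀ B' : Set X, IsMaxSubball B' I → ∀ x ∈ B', ∀ y ∈ B', f x = f y)
    (hfm : ∫ x, f x ∂ν = 0)
    (hf'0 : ∀ x ∉ I', f' x = 0)
    (hf'c : ∀ B' : Set X, IsMaxSubball B' I' → ∀ x ∈ B', ∀ y ∈ B', f' x = f' y)
    (hf'm : ∫ x, f' x ∂ν = 0) :
    ∫ x, (starRingEnd ℂ) (f x) * f' x ∂ν = 0 := by
  have hI_sub := hstruct I hI hdI
  have hI'_sub := hstruct I' hI' hdI'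
  have hf : IsWavelet ν I f := isWavelet_of_finite_maxSubballs hν hI_sub hf0 hfc hfm
  have hf' : IsWavelet ν I' f' := isWavelet_of_finite_maxSubballs hν hI'_sub hf'0 hf'c hf'm
  simpa only [RCLike.inner_apply'] using ultrametric_wavelets_orthogonal_general (𝕜 := ℂ)
    hI hI' hI_sub.2.subset hI'_sub.2.subset hne hf hf'
end

section
/- Let X be an ultrametric space, ν a Borel measure on X, and B a closed ball of positive diameter which is the union of its pairwise disjoint maximal proper closed subballs B₁, …, B_p (p ≥ 2), with ν(B) < ∞. Let k : X × X → [0,∞) be a measurable sup-kernel. Then: (a) k(x,y) takes one common value t_B for all pairs x ∈ B_i, y ∈ B_j with i ≠ j; (b) the integral ∫_{X∖B} k(x,y) dν(y) takes one common value Λ ∈ [0,∞] for all x ∈ B; (c) if Λ < ∞, then for every function ψ : X → ℂ which vanishes outside B, is constant on each B_i, and satisfies ∫ ψ dν = 0, and for every x ∈ X, the integral ∫ k(x,y)(ψ(x) − ψ(y)) dν(y) converges absolutely and equals λ·ψ(x), where λ = t_B·ν(B) + Λ. That is, ψ is an eigenfunction of the ultrametric pseudodifferential operator Tf(x) = ∫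 k(x,y)(f(x) − f(y)) dν(y) with eigenvalue λ = t_B·ν(B) + Λ. -/
open MeasureTheory
open scoped ENNReal

/-!
If `x, y ∈ B` lie in different maximal proper subballs then `sup(x,y) = B`, since it lies inside
`B` and strictly contains a maximal subball. If `x ∈ B` and `y ∉ B` then `sup(x,y)` contains `B`
and does not depend on the position of `x` in `B`. A sup-kernel is therefore constant on the
first kind of pairs and independent of `x` on the second kind.

For `x ∈ B` the integrand `k(x,y)(ψ(x) − ψ(y))` vanishes when `y` shares the subball of `x`, so
for `y ∈ B` one may replace `k(x,y)` by the value `t` taken on pairs from different subballs.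
This gives `∫_B t(ψ(x) − ψ(y)) dν(y) + ∫_{X∖B} k(x,y) ψ(x) dν(y)`, where the mean of `ψ` drops
out. For `x ∉ B` the kernel is constant on the support of `ψ`, and the integral is a multiple of
`∫ ψ dν = 0`.
-/

namespace IsClosedBall

section Metric

variable {X : Type*} [MetricSpace X] {B : Set X}

theorem nonempty_s10 (hB : IsClosedBall B) : B.Nonempty := by
  obtain ⟨a, r, hr, rfl⟩ := hB
  exact Metric.nonempty_closedBall.2 hr

theorem measurableSet_s10 [MeasurableSpace X] [OpensMeasurableSpace X] (hB : IsClosedBall B) :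
    MeasurableSet B := by
  obtain ⟨a, r, -, rfl⟩ := hB
  exact measurableSet_closedBall

end Metric

section Ultrametric

variable {X : Type*} [MetricSpace X] [IsUltrametricDist X] {B : Set X} {x x' y : X}

theorem dist_lt_dist_of_notMem (hB : IsClosedBall B) (hx : x ∈ B) (hx' : x' ∈ B) (hy : y ∉ B) :
    dist x x' < dist x y := by
  obtain ⟨a, r, -, rfl⟩ := hB
  rw [IsUltrametricDist.closedBall_eq_of_mem hx, Metric.mem_closedBall'] at hx' hy
  exact hx'.trans_lt (not_le.1 hy)

theorem dist_eq_dist_of_notMem (hB : IsClosedBall B) (hx : x ∈ B) (hx' : x' ∈ B) (hy : y ∉ B) :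
    dist x y = dist x' y := by
  have hlt : dist x' x < dist x y := dist_comm x x' ▸ hB.dist_lt_dist_of_notMem hx hx' hy
  rw [IsUltrametricDist.dist_eq_max_of_dist_ne_dist x' x y hlt.ne, max_eq_right hlt.le]

theorem closedBall_dist_subset (hB : IsClosedBall B) (hx : x ∈ B) (hy : y ∈ B) :
    Metric.closedBall x (dist x y) ⊆ B := by
  intro z hz
  by_contra hzB
  exact (hB.dist_lt_dist_of_notMem hx hy hzB).not_ge (Metric.mem_closedBall'.1 hz)

theorem ssubset_closedBall_dist (hB : IsClosedBall B) (hx : x ∈ B) (hy : y ∉ B) :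
    B ⊂ Metric.closedBall x (dist x y) :=
  ⟨fun _ hz => Metric.mem_closedBall'.2 (hB.dist_lt_dist_of_notMem hx hz hy).le,
    fun h => hy (h (Metric.mem_closedBall'.2 le_rfl))⟩

end Ultrametric

end IsClosedBall

theorem IsMaxSubball.closedBall_dist_eq {X : Type*} [MetricSpace X] [IsUltrametricDist X]
    {B B' : Set X} {x y : X} (hB' : IsMaxSubball B' B) (hB : IsClosedBall B)
    (hx : x ∈ B') (hy : y ∈ B \ B') : Metric.closedBall x (dist x y) = B := by
  obtain ⟨hball, hssub, hmax⟩ := hB'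
  exact (hB.closedBall_dist_subset (hssub.subset hx) hy.1).eq_or_ssubset.resolve_right
    (hmax _ ⟨x, dist x y, dist_nonneg, rfl⟩ (hball.ssubset_closedBall_dist hx hy.2))

/-- A sup-kernel: `k x y` depends only on `sup(x,y)`, encoded as the closed ball around `x` with
radius `dist x y`. Values in any type are allowed. -/
def IsSupKernel {X α : Type*} [PseudoMetricSpace X] (k : X → X → α) : Prop :=
  ∀ x y x' y' : X,
    Metric.closedBall x (dist x y) = Metric.closedBall x' (dist x' y') → k x y = k x' y'

namespace IsSupKernel

theorem symm {X α : Type*} [PseudoMetricSpace X] [IsUltrametricDist X] {k : X → X → α}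
    (hk : IsSupKernel k) (x y : X) : k x y = k y x := by
  apply hk
  rw [dist_comm y x]
  exact IsUltrametricDist.closedBall_eq_of_mem (Metric.mem_closedBall'.2 le_rfl)

variable {X α : Type*} [MetricSpace X] [IsUltrametricDist X] {k : X → X → α}
  {B B' B'' : Set X} {x x' y y' : X}

theorem eq_of_mem_of_notMem (hk : IsSupKernel k) (hB : IsClosedBall B) (hx : x ∈ B) (hx' : x' ∈ B)
    (hy : y ∉ B) : k x y = k x' y := by
  apply hk
  rw [← hB.dist_eq_dist_of_notMem hx hx' hy]
  exact IsUltrametricDist.closedBall_eq_of_mem ((hB.ssubset_closedBall_dist hx hy).subset hx')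

theorem eq_of_notMem_of_mem (hk : IsSupKernel k) (hB : IsClosedBall B) (hx : x ∉ B) (hy : y ∈ B)
    (hy' : y' ∈ B) : k x y = k x y' := by
  rw [hk.symm x y, hk.symm x y', hk.eq_of_mem_of_notMem hB hy hy' hx]

theorem eq_of_isMaxSubball (hk : IsSupKernel k) (hB : IsClosedBall B)
    (hB' : IsMaxSubball B' B) (hx : x ∈ B') (hy : y ∈ B \ B')
    (hB'' : IsMaxSubball B'' B) (hx' : x' ∈ B'') (hy' : y' ∈ B \ B'') : k x y = k x' y' :=
  hk _ _ _ _ ((hB'.closedBall_dist_eq hB hx hy).trans (hB''.closedBall_dist_eq hB hx' hy').symm)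

theorem setLIntegral_compl_eq [MeasurableSpace X] [OpensMeasurableSpace X] (hk : IsSupKernel k)
    (hB : IsClosedBall B) (hx : x ∈ B) (hx' : x' ∈ B) (f : α → ℝ≥0∞) (ν : Measure X) :
    ∫⁻ y in Bᶜ, f (k x y) ∂ν = ∫⁻ y in Bᶜ, f (k x' y) ∂ν :=
  setLIntegral_congr_fun hB.measurableSet_s10.compl fun _ hy =>
    congrArg f (hk.eq_of_mem_of_notMem hB hx hx' hy)

theorem exists_smul_sub_eq_smul_of_notMem {R E : Type*} [Ring R] [AddCommGroup E] [Module R E]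
    {k : X → X → R} {ψ : X → E} (hk : IsSupKernel k) (hB : IsClosedBall B)
    (hψ : ∀ y ∉ B, ψ y = 0) (hx : x ∉ B) : ∃ c : R, ∀ y, k x y • (ψ x - ψ y) = c • ψ y := by
  obtain ⟨a, ha⟩ := hB.nonempty_s10
  refine ⟨-k x a, fun y => ?_⟩
  by_cases hy : y ∈ B
  · rw [hψ x hx, hk.eq_of_notMem_of_mem hB hx hy ha, zero_sub, smul_neg, neg_smul]
  · rw [hψ x hx, hψ y hy, sub_zero, smul_zero, smul_zero]

end IsSupKernel

theorem integrable_of_forall_const_on_iUnion {Ω E ι : Type*} [MeasurableSpace Ω]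
    [NormedAddCommGroup E] [Finite ι] {μ : Measure Ω} {s : ι → Set Ω} {ψ : Ω → E}
    (hs : ∀ i, MeasurableSet (s i)) (hμs : ∀ i, μ (s i) ≠ ∞)
    (hψ_const : ∀ i, ∀ x ∈ s i, ∀ y ∈ s i, ψ x = ψ y) (hψ_zero : ∀ x ∉ ⋃ i, s i, ψ x = 0) :
    Integrable ψ μ := by
  refine IntegrableOn.integrable_of_forall_notMem_eq_zero
    (integrableOn_finite_iUnion.2 fun i => ?_) hψ_zero
  obtain hempty | ⟨z, hz⟩ := (s i).eq_empty_or_nonempty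
  · simp only [hempty, integrableOn_empty]
  · exact (integrableOn_const (hμs i)).congr_fun (fun y hy => hψ_const i z hz y hy) (hs i)

theorem smul_sub_eq_piecewise_smul_sub {Ω R E : Type*} [Ring R] [AddCommGroup E] [Module R E]
    {s : Set Ω} [DecidablePred (· ∈ s)] {κ : Ω → R} {ψ : Ω → E} {c : E} {t : R}
    (hψ : ∀ y ∉ s, ψ y = 0) (hκ : ∀ y ∈ s, κ y • (c - ψ y) = t • (c - ψ y)) (y : Ω) :
    κ y • (c - ψ y) = s.piecewise (fun _ => t) κ y • c - t • ψ y := by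
  by_cases hy : y ∈ s
  · rw [hκ y hy, s.piecewise_eq_of_mem _ _ hy, smul_sub]
  · rw [hψ y hy, s.piecewise_eq_of_notMem _ _ hy, sub_zero, smul_zero, sub_zero]

section SmulSub

variable {Ω E : Type*} [MeasurableSpace Ω] [NormedAddCommGroup E] [NormedSpace ℝ E]
  {μ : Measure Ω} {s : Set Ω} {κ : Ω → ℝ} {ψ : Ω → E} {c : E} {t : ℝ}

theorem integrable_smul_sub (hs : MeasurableSet s) (hμs : μ s ≠ ∞) (hκ_int : IntegrableOn κ sᶜ μ)
    (hψ_int : Integrable ψ μ) (hψ : ∀ y ∉ s, ψ y = 0)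
    (hκ : ∀ y ∈ s, κ y • (c - ψ y) = t • (c - ψ y)) :
    Integrable (fun y => κ y • (c - ψ y)) μ := by
  classical
  simp only [smul_sub_eq_piecewise_smul_sub hψ hκ]
  exact ((Integrable.piecewise hs (integrableOn_const hμs) hκ_int).smul_const c).sub
    (hψ_int.smul t)

theorem integral_smul_sub [CompleteSpace E] (hs : MeasurableSet s) (hμs : μ s ≠ ∞)
    (hκ_int : IntegrableOn κ sᶜ μ) (hψ_int : Integrable ψ μ) (hψ : ∀ y ∉ s, ψ y = 0)
    (hκ : ∀ y ∈ s, κ y • (c - ψ y) = t • (c - ψ y)) :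
    ∫ y, κ y • (c - ψ y) ∂μ = (t * μ.real s + ∫ y in sᶜ, κ y ∂μ) • c - t • ∫ y, ψ y ∂μ := by
  classical
  have ht_int : IntegrableOn (fun _ => t) s μ := integrableOn_const hμs
  simp only [smul_sub_eq_piecewise_smul_sub hψ hκ]
  rw [integral_sub ((Integrable.piecewise hs ht_int hκ_int).smul_const c) (hψ_int.fun_smul t),
    integral_smul_const, integral_piecewise hs ht_int hκ_int, setIntegral_const, integral_smul,
    smul_eq_mul, mul_comm]

end SmulSub

theorem ultrametric_wavelet_eigenfunction_general {X E ι : Type*} [MetricSpace X]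
    [IsUltrametricDist X] [MeasurableSpace X] [OpensMeasurableSpace X]
    [NormedAddCommGroup E] [NormedSpace ℝ E] [CompleteSpace E] (ν : Measure X)
    (k : X → X → ℝ) (hk0 : ∀ x y, 0 ≤ k x y) (hkm : ∀ x, AEStronglyMeasurable (k x) ν)
    (hsup : IsSupKernel k) {B : Set X} (hB : IsClosedBall B) (hνB : ν B ≠ ∞)
    (Bs : ι → Set X) (hBs : ∀ i, IsMaxSubball (Bs i) B)
    (hdisj : Pairwise (Function.onFun Disjoint Bs)) (hcover : B = ⋃ i, Bs i) :
    ∃ (t : ℝ) (Λ : ℝ≥0∞),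
      (∀ i j, i ≠ j → ∀ x ∈ Bs i, ∀ y ∈ Bs j, k x y = t) ∧
      (∀ x ∈ B, ∫⁻ y in Bᶜ, ENNReal.ofReal (k x y) ∂ν = Λ) ∧
      (Λ ≠ ∞ → ∀ ψ : X → E, Integrable ψ ν → (∀ x ∉ B, ψ x = 0) →
        (∀ i, ∀ x ∈ Bs i, ∀ y ∈ Bs i, ψ x = ψ y) →
        (∫ x, ψ x ∂ν = 0) →
        ∀ x : X,
          Integrable (fun y => k x y • (ψ x - ψ y)) ν ∧
          ∫ y, k x y • (ψ x - ψ y) ∂ν = (t * ν.real B + Λ.toReal) • ψ x) := by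
  obtain ⟨a, ha⟩ := hB.nonempty_s10
  obtain ⟨i₀, hai₀⟩ := Set.mem_iUnion.1 (hcover ▸ ha)
  obtain ⟨b, hb⟩ := Set.nonempty_of_ssubset (hBs i₀).2.1
  have hkt : ∀ i, ∀ x ∈ Bs i, ∀ y ∈ B \ Bs i, k x y = k a b := fun i x hx y hy =>
    hsup.eq_of_isMaxSubball hB (hBs i) hx hy (hBs i₀) hai₀ hb
  have hΛ_eq : ∀ x ∈ B, ∫⁻ y in Bᶜ, ENNReal.ofReal (k x y) ∂ν
      = ∫⁻ y in Bᶜ, ENNReal.ofReal (k a y) ∂ν := fun x hx =>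
    hsup.setLIntegral_compl_eq hB hx ha ENNReal.ofReal ν
  refine ⟨k a b, _, fun i j hij x hx y hy => hkt i x hx y
    ⟨(hBs j).2.1.subset hy, (hdisj hij).notMem_of_mem_right hy⟩, hΛ_eq, ?_⟩
  intro hΛ ψ hψ_int hψ_zero hψ_const hψ_mean x
  by_cases hx : x ∈ B
  · have hkψ : ∀ y ∈ B, k x y • (ψ x - ψ y) = k a b • (ψ x - ψ y) := by
      obtain ⟨i, hxi⟩ := Set.mem_iUnion.1 (hcover ▸ hx)
      intro y hy
      by_cases hyi : y ∈ Bs i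
      · simp only [hψ_const i x hxi y hyi, sub_self, smul_zero]
      · rw [hkt i x hxi y ⟨hy, hyi⟩]
    have hk_nonneg : 0 ≤ᵐ[ν.restrict Bᶜ] k x := ae_of_all _ (hk0 x)
    have hk_int : IntegrableOn (k x) Bᶜ ν :=
      (lintegral_ofReal_ne_top_iff_integrable (hkm x).restrict hk_nonneg).1 (hΛ_eq x hx ▸ hΛ)
    refine ⟨integrable_smul_sub hB.measurableSet_s10 hνB hk_int hψ_int hψ_zero hkψ, ?_⟩
    rw [integral_smul_sub hB.measurableSet_s10 hνB hk_int hψ_int hψ_zero hkψ, hψ_mean, smul_zero,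
      sub_zero, integral_eq_lintegral_of_nonneg_ae hk_nonneg (hkm x).restrict, hΛ_eq x hx]
  · obtain ⟨c, hc⟩ := hsup.exists_smul_sub_eq_smul_of_notMem hB hψ_zero hx
    simp only [hc]
    exact ⟨hψ_int.smul c, by rw [integral_smul, hψ_mean, hψ_zero x hx, smul_zero, smul_zero]⟩

/-- Wavelets are eigenfunctions of the ultrametric pseudodifferential operator.
Let `B` be a closed ball of positive diameter which is the disjoint union of its
maximal proper closed subballs `B₁, …, B_p` (`p ≥ 2`), `ν B < ∞`, and let `k` be a
measurable sup-kernel. Then: (a) `k` has one common value `t` on pairs from distinct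
subballs; (b) `∫_{X∖B} k(x,y) dν(y)` has one common value `Λ ∈ [0,∞]` for `x ∈ B`;
(c) if `Λ < ∞` then every zero-mean `ψ` supported in `B` and constant on each `Bᵢ`
satisfies `∫ k(x,y)(ψ(x)−ψ(y)) dν(y) = (t·ν(B) + Λ)·ψ(x)` with absolutely convergent
integral, for every `x ∈ X`. -/
theorem ultrametric_wavelet_eigenfunction {X : Type*} [MetricSpace X]
    [IsUltrametricDist X] [MeasurableSpace X] [BorelSpace X] (ν : Measure X)
    (k : X → X → ℝ) (hk0 : ∀ x y, 0 ≤ k x y)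
    (hkm : Measurable (Function.uncurry k))
    -- `k` is a sup-kernel: `k(x,y)` depends only on the minimal ball `sup(x,y)`
    (hsup : ∀ x y x' y' : X,
      Metric.closedBall x (dist x y) = Metric.closedBall x' (dist x' y') →
        k x y = k x' y')
    {B : Set X} (hB : IsClosedBall B) (hdB : 0 < EMetric.diam B) (hνB : ν B < ⊤)
    (p : ℕ) (hp : 2 ≤ p) (Bs : Fin p → Set X)
    (hBs : ∀ i, IsMaxSubball (Bs i) B)
    (hdisj : Pairwise (Function.onFun Disjoint Bs))
    (hcover : B = ⋃ i, Bs i) :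
    ∃ (t : ℝ) (Λ : ℝ≥0∞),
      (∀ i j, i ≠ j → ∀ x ∈ Bs i, ∀ y ∈ Bs j, k x y = t) ∧
      (∀ x ∈ B, ∫⁻ y in Bᶜ, ENNReal.ofReal (k x y) ∂ν = Λ) ∧
      (Λ ≠ ⊤ → ∀ ψ : X → ℂ, (∀ x ∉ B, ψ x = 0) →
        (∀ i : Fin p, ∀ x ∈ Bs i, ∀ y ∈ Bs i, ψ x = ψ y) →
        (∫ x, ψ x ∂ν = 0) →
        ∀ x : X,
          Integrable (fun y => (k x y : ℂ) * (ψ x - ψ y)) ν ∧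
          ∫ y, (k x y : ℂ) * (ψ x - ψ y) ∂ν
            = ((t * (ν B).toReal + Λ.toReal : ℝ) : ℂ) * ψ x) := by
  obtain ⟨t, Λ, hconst, hΛ, heigen⟩ := ultrametric_wavelet_eigenfunction_general (E := ℂ) ν k hk0
    (fun _ => hkm.of_uncurry_left.aestronglyMeasurable) hsup hB hνB.ne Bs hBs hdisj hcover
  exact ⟨t, Λ, hconst, hΛ, fun hΛ_top ψ hψ_zero hψ_const => heigen hΛ_top ψ
    (integrable_of_forall_const_on_iUnion (fun i => (hBs i).1.measurableSet_s10)
      (fun i => measure_ne_top_of_subset (hBs i).2.1.subset hνB.ne) hψ_const (hcover ▸ hψ_zero))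
    hψ_zero hψ_const⟩
end

section
/- Let X be an ultrametric space, ν a Borel measure on X, and C : X × X → ℂ a function such that C(x,x') = C(y,y') whenever the closed balls B̄(x, d(x,x')) and B̄(y, d(y,y')) coincide as sets (i.e., C(x,x') depends only on the minimal ball sup(x,x') containing x and x'). Let I and J be disjoint closed balls, let f : X → ℂ be ν-integrable, vanish outside I, and satisfy ∫ f dν = 0, and let g : X → ℂ be ν-integrable and vanish outside J. Then the function (x,x') ↦ conj(f(x))·C(x,x')·g(x') is ν⊗ν-integrable and ∬ conj(f(x))·C(x,x')·g(x') dν(x) dν(x') = 0. (This is the deterministic content of ultrametric Markovianity: for a Gaussian random field whose covariance depends only on sup(x,x'), the random variables ∫_I ψ f dν and ∫_J ψ g dν, over disjoint balls I and J with at least one of f, g of zero mean, are uncorrelated and hence independent.) -/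
open MeasureTheory

/-!
Triangles are isosceles, so the distance from a point `x` of a closed ball to a point outside it
does not depend on `x`. Applied to both of the disjoint balls `I` and `J`, this makes `sup(x, x')`,
and with it the kernel, constant on `I × J`. The double integral therefore factors, and one of the
factors is the conjugate of `∫ f`.
-/

open Metric

section Ultrametric

variable {X : Type*} [PseudoMetricSpace X]

/-- The ball `sup(x, y)`, the smallest closed ball containing `x` and `y` when `X` is
ultrametric. -/
def supBall (x y : X) : Set X := closedBall x (dist x y)

variable [IsUltrametricDist X] {a b x y : X} {r s : ℝ}

lemma dist_eq_of_mem_closedBall_of_notMem (hx : x ∈ closedBall a r) (hy : y ∉ closedBall a r) :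
    dist x y = dist a y := by
  have hlt : dist x a < dist a y := by
    rw [dist_comm a y]
    exact (mem_closedBall.1 hx).trans_lt (not_le.1 hy)
  rw [IsUltrametricDist.dist_eq_max_of_dist_ne_dist x a y hlt.ne, max_eq_right hlt.le]

lemma dist_eq_of_mem_closedBall_of_disjoint (hd : Disjoint (closedBall a r) (closedBall b s))
    (hx : x ∈ closedBall a r) (hy : y ∈ closedBall b s) : dist x y = dist a b := by
  have ha : a ∈ closedBall a r := mem_closedBall_self (nonempty_closedBall.1 ⟨x, hx⟩)
  calc dist x y = dist a y := dist_eq_of_mem_closedBall_of_notMem hx (hd.notMem_of_mem_right hy)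
    _ = dist y a := dist_comm a y
    _ = dist b a := dist_eq_of_mem_closedBall_of_notMem hy (hd.notMem_of_mem_left ha)
    _ = dist a b := dist_comm b a

lemma supBall_eq_of_mem_closedBall_of_disjoint (hd : Disjoint (closedBall a r) (closedBall b s))
    (hx : x ∈ closedBall a r) (hy : y ∈ closedBall b s) : supBall x y = supBall a b := by
  have hb : b ∈ closedBall b s := mem_closedBall_self (nonempty_closedBall.1 ⟨y, hy⟩)
  have hxab : x ∈ closedBall a (dist a b) := by
    have hrab : r < dist a b := by
      rw [dist_comm]
      exact not_le.1 (hd.notMem_of_mem_right hb)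
    exact closedBall_subset_closedBall hrab.le hx
  rw [supBall, supBall, dist_eq_of_mem_closedBall_of_disjoint hd hx hy,
    IsUltrametricDist.closedBall_eq_of_mem hxab]

end Ultrametric

section ConstantKernel

variable {α β R : Type*} {I : Set α} {J : Set β} {K : α → β → R} {c : R} {u : α → R} {v : β → R}

lemma mul_kernel_mul_eq_of_const_on [MulZeroClass R] (hK : ∀ x ∈ I, ∀ y ∈ J, K x y = c)
    (hu : ∀ x ∉ I, u x = 0) (hv : ∀ y ∉ J, v y = 0) (x : α) (y : β) :
    u x * K x y * v y = u x * c * v y := by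
  by_cases hx : x ∈ I
  · by_cases hy : y ∈ J
    · rw [hK x hx y hy]
    · simp [hv y hy]
  · simp [hu x hx]

variable [MeasurableSpace α] [MeasurableSpace β] {μ : Measure α} {ν : Measure β}

lemma integrable_mul_kernel_mul_of_const_on [NormedRing R]
    (hK : ∀ x ∈ I, ∀ y ∈ J, K x y = c) (hu : ∀ x ∉ I, u x = 0) (hv : ∀ y ∉ J, v y = 0)
    (hui : Integrable u μ) (hvi : Integrable v ν) :
    Integrable (fun q : α × β => u q.1 * K q.1 q.2 * v q.2) (μ.prod ν) := by
  simp only [mul_kernel_mul_eq_of_const_on hK hu hv]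
  exact (hui.mul_const c).mul_prod hvi

lemma integral_mul_kernel_mul_of_const_on [RCLike R] [SFinite μ] [SFinite ν]
    (hK : ∀ x ∈ I, ∀ y ∈ J, K x y = c) (hu : ∀ x ∉ I, u x = 0) (hv : ∀ y ∉ J, v y = 0) :
    ∫ q : α × β, u q.1 * K q.1 q.2 * v q.2 ∂(μ.prod ν) = (∫ x, u x ∂μ) * c * ∫ y, v y ∂ν := by
  simp only [mul_kernel_mul_eq_of_const_on hK hu hv]
  rw [integral_prod_mul (fun x => u x * c) v, integral_mul_const]

end ConstantKernel

theorem ultrametric_markov_uncorrelated_general {X 𝕜 : Type*} [PseudoMetricSpace X]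
    [IsUltrametricDist X] [MeasurableSpace X] [RCLike 𝕜] {μ ν : Measure X} [SFinite μ] [SFinite ν]
    {C : X → X → 𝕜} (hC : ∀ x x' y y' : X, supBall x x' = supBall y y' → C x x' = C y y')
    {a b : X} {r s : ℝ} (hd : Disjoint (closedBall a r) (closedBall b s)) {f g : X → 𝕜}
    (hf : Integrable f μ) (hf0 : ∀ x ∉ closedBall a r, f x = 0)
    (hg : Integrable g ν) (hg0 : ∀ x ∉ closedBall b s, g x = 0) :
    Integrable (fun q : X × X => (starRingEnd 𝕜) (f q.1) * C q.1 q.2 * g q.2) (μ.prod ν) ∧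
    ∫ q : X × X, (starRingEnd 𝕜) (f q.1) * C q.1 q.2 * g q.2 ∂(μ.prod ν) =
      (starRingEnd 𝕜) (∫ x, f x ∂μ) * C a b * ∫ x, g x ∂ν := by
  have hconst : ∀ x ∈ closedBall a r, ∀ x' ∈ closedBall b s, C x x' = C a b := fun x hx x' hx' =>
    hC x x' a b (supBall_eq_of_mem_closedBall_of_disjoint hd hx hx')
  have hconj : Integrable (fun x => (starRingEnd 𝕜) (f x)) μ :=
    RCLike.conjLIE.integrable_comp_iff.2 hf
  have hconj0 : ∀ x ∉ closedBall a r, (starRingEnd 𝕜) (f x) = 0 := fun x hx => by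
    rw [hf0 x hx, map_zero]
  refine ⟨integrable_mul_kernel_mul_of_const_on hconst hconj0 hg0 hconj hg, ?_⟩
  rw [integral_mul_kernel_mul_of_const_on hconst hconj0 hg0, integral_conj]

/-- Deterministic content of ultrametric Markovianity: if the covariance `C(x,x')`
depends only on the minimal ball `sup(x,x')`, and `f`, `g` are integrable functions
supported in disjoint closed balls `I`, `J` with `f` of zero mean, then
`∬ conj(f(x))·C(x,x')·g(x') dν(x) dν(x') = 0` (with absolute convergence). -/
theorem ultrametric_markov_uncorrelated {X : Type*} [MetricSpace X] [IsUltrametricDist X]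
    [MeasurableSpace X] [BorelSpace X] (ν : Measure X) [SFinite ν]
    (C : X → X → ℂ)
    (hC : ∀ x x' y y' : X,
      Metric.closedBall x (dist x x') = Metric.closedBall y (dist y y') →
        C x x' = C y y')
    {I J : Set X} (hI : IsClosedBall I) (hJ : IsClosedBall J) (hd : Disjoint I J)
    (f g : X → ℂ)
    (hf : Integrable f ν) (hf0 : ∀ x ∉ I, f x = 0) (hfm : ∫ x, f x ∂ν = 0)
    (hg : Integrable g ν) (hg0 : ∀ x ∉ J, g x = 0) :
    Integrable (fun q : X × X => (starRingEnd ℂ) (f q.1) * C q.1 q.2 * g q.2) (ν.prod ν) ∧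
    ∫ q : X × X, (starRingEnd ℂ) (f q.1) * C q.1 q.2 * g q.2 ∂(ν.prod ν) = 0 := by
  obtain ⟨a, r, -, rfl⟩ := hI
  obtain ⟨b, s, -, rfl⟩ := hJ
  simpa only [hfm, map_zero, zero_mul] using
    ultrametric_markov_uncorrelated_general hC hd hf hf0 hg hg0
end
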